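/- A protocol sequence set s_1, …, s_K is SI if and only if for every choice of bits (b_1,…,b_K) ∈ {0,1}^K the quantity N(b_1,…,b_K | τ_1,…,τ_K) is a constant function of the shifts (τ_1,…,τ_K) ∈ (ZMod L)^K. -/

import Mathlib

open Finset

/-- Generalized Hamming cross-correlation of the sequences indexed by `A`
(only the shifts `τ j` with `j ∈ A` matter). -/
def Hcorr {K L : ℕ} [NeZero L] (s : Fin K → ZMod L → ℕ)
    (A : Finset (Fin K)) (τ : Fin K → ZMod L) : ℕ :=
  ∑ t : ZMod L, ∏ j ∈ A, s j (t + τ j)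

/-- The family `s` is shift-invariant (SI): every generalized Hamming
cross-correlation is independent of the relative shifts. -/
def IsSI {K L : ℕ} [NeZero L] (s : Fin K → ZMod L → ℕ) : Prop :=
  ∀ A : Finset (Fin K), A.Nonempty →
    ∀ τ τ' : Fin K → ZMod L, Hcorr s A τ = Hcorr s A τ'

/-- Number of slots `t` in one period where user `i` transmits and at most
`γ - 1` other users transmit. -/
def Rcount {K L : ℕ} [NeZero L] (s : Fin K → ZMod L → ℕ) (γ : ℕ)
    (i : Fin K) (τ : Fin K → ZMod L) : ℕ :=
  (Finset.univ.filter (fun t : ZMod L =>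
    s i (t + τ i) = 1 ∧ ∑ j ∈ Finset.univ.erase i, s j (t + τ j) ≤ γ - 1)).card

/-- Throughput of user `i` under MPR capability `γ` at shifts `τ`. -/
def R {K L : ℕ} [NeZero L] (s : Fin K → ZMod L → ℕ) (γ : ℕ)
    (i : Fin K) (τ : Fin K → ZMod L) : ℚ :=
  (Rcount s γ i τ : ℚ) / L

/-- The family `s` is throughput-invariant (TI) with MPR capability `γ`. -/
def IsTI {K L : ℕ} [NeZero L] (s : Fin K → ZMod L → ℕ) (γ : ℕ) : Prop :=
  ∀ i : Fin K, ∀ τ τ' : Fin K → ZMod L, R s γ i τ = R s γ i τ'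

/-- Duty factor of a single sequence. -/
def duty {L : ℕ} [NeZero L] (s : ZMod L → ℕ) : ℚ :=
  (∑ t : ZMod L, (s t : ℚ)) / L

/-- `Ncount s b τ` is the number of `t ∈ ZMod L` with `s j (t + τ j) = b j` for all `j`. -/
def Ncount {K L : ℕ} [NeZero L] (s : Fin K → ZMod L → ℕ)
    (b : Fin K → ℕ) (τ : Fin K → ZMod L) : ℕ :=
  (Finset.univ.filter (fun t : ZMod L => ∀ j, s j (t + τ j) = b j)).card

/-!
A binary vector is determined by the set of coordinates where it equals `1`. In these terms the
correlation of `A` counts the slots whose set contains `A`, while the count of `b` counts the slots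
whose set equals that of `b`. The first family of numbers is obtained from the second by summing
over supersets, and this can be undone by induction from the largest set downwards.
-/

section Fibers

variable {T T' P : Type*} [Fintype T] [Fintype T'] [DecidableEq P]

theorem card_filter_comp_eq_of_card_fiber_eq {x : T → P} {y : T' → P} {p : P → Prop}
    [DecidablePred p] (h : ∀ b, p b → #{t | x t = b} = #{t | y t = b}) :
    #{t | p (x t)} = #{t | p (y t)} := by
  let S : Finset P := {b ∈ univ.image x ∪ univ.image y | p b}
  calc #{t | p (x t)} = #{t | x t ∈ S} := by simp [S]
    _ = ∑ b ∈ S, #{t | x t = b} := (sum_card_fiberwise_eq_card_filter ..).symm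
    _ = ∑ b ∈ S, #{t | y t = b} := sum_congr rfl fun b hb => h b (mem_filter.1 hb).2
    _ = #{t | y t ∈ S} := sum_card_fiberwise_eq_card_filter ..
    _ = #{t | p (y t)} := by simp [S]

theorem card_filter_le_eq_add_card_filter_lt [PartialOrder P] [DecidableLE P] [DecidableLT P]
    (x : T → P) (a : P) : #{t | a ≤ x t} = #{t | x t = a} + #{t | a < x t} := by
  classical
  rw [← card_union_of_disjoint (disjoint_filter.2 fun t _ h => h.not_gt), ← filter_or]
  simp only [le_iff_eq_or_lt, eq_comm]

theorem forall_card_filter_le_eq_iff [PartialOrder P] [WellFoundedGT P] [DecidableLE P]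
    (x : T → P) (y : T' → P) :
    (∀ a, #{t | a ≤ x t} = #{t | a ≤ y t}) ↔ ∀ a, #{t | x t = a} = #{t | y t = a} := by
  classical
  refine ⟨fun h a => ?_, fun h a => card_filter_comp_eq_of_card_fiber_eq fun b _ => h b⟩
  induction a using WellFoundedGT.induction with
  | ind a ih =>
    have card_lt : #{t | a < x t} = #{t | a < y t} := card_filter_comp_eq_of_card_fiber_eq ih
    have card_le := h a
    rw [card_filter_le_eq_add_card_filter_lt, card_filter_le_eq_add_card_filter_lt,
      card_lt] at card_le
    exact Nat.add_right_cancel card_le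

end Fibers

section Binary

variable {ι R : Type*} [Fintype ι] [DecidableEq R]

/-- The set of coordinates at which a vector equals `1`. It encodes a binary vector as a finite
set, so that products of coordinates become inclusions. -/
def ones [One R] (v : ι → R) : Finset ι := {j | v j = 1}

theorem mem_ones [One R] {v : ι → R} {j : ι} : j ∈ ones v ↔ v j = 1 := by
  simp [ones]

theorem ones_ite_mem [DecidableEq ι] [Zero R] [One R] [NeZero (1 : R)] (A : Finset ι) :
    ones (fun j => if j ∈ A then (1 : R) else 0) = A := by
  ext j
  simp [mem_ones]

theorem ones_eq_ones_iff [Zero R] [One R] {v w : ι → R}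
    (hv : ∀ j, v j = 0 ∨ v j = 1) (hw : ∀ j, w j = 0 ∨ w j = 1) :
    ones v = ones w ↔ ∀ j, v j = w j := by
  simp only [Finset.ext_iff, mem_ones]
  exact forall_congr' fun j => by grind

theorem prod_eq_ite_subset_ones [DecidableEq ι] [CommMonoidWithZero R] {v : ι → R}
    (hv : ∀ j, v j = 0 ∨ v j = 1) (A : Finset ι) :
    ∏ j ∈ A, v j = if A ⊆ ones v then 1 else 0 := by
  split_ifs with hA
  · exact prod_eq_one fun j hj => mem_ones.1 (hA hj)
  · obtain ⟨j, hjA, hj⟩ := not_subset.1 hA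
    exact prod_eq_zero hjA ((hv j).resolve_right (mt mem_ones.2 hj))

variable {T : Type*} [Fintype T] {x y : T → ι → R}

theorem forall_card_ones_eq_iff [DecidableEq ι] [Zero R] [One R] [NeZero (1 : R)]
    (hx : ∀ t j, x t j = 0 ∨ x t j = 1) (hy : ∀ t j, y t j = 0 ∨ y t j = 1) :
    (∀ A, #{t | ones (x t) = A} = #{t | ones (y t) = A}) ↔
      ∀ b : ι → R, (∀ j, b j = 0 ∨ b j = 1) →
        #{t | ∀ j, x t j = b j} = #{t | ∀ j, y t j = b j} := by
  constructor
  · intro h b hb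
    simpa only [ones_eq_ones_iff (hx _) hb, ones_eq_ones_iff (hy _) hb] using h (ones b)
  · intro h A
    have indicator_binary (j : ι) :
        (if j ∈ A then (1 : R) else 0) = 0 ∨ (if j ∈ A then (1 : R) else 0) = 1 :=
      (ite_eq_or_eq (j ∈ A) 1 0).symm
    simpa only [← ones_eq_ones_iff (hx _) indicator_binary,
      ← ones_eq_ones_iff (hy _) indicator_binary, ones_ite_mem] using h _ indicator_binary

variable [CommSemiring R]

theorem sum_prod_eq_card_subset_ones [DecidableEq ι] (hx : ∀ t j, x t j = 0 ∨ x t j = 1)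
    (A : Finset ι) : ∑ t, ∏ j ∈ A, x t j = #{t | A ⊆ ones (x t)} := by
  simp only [prod_eq_ite_subset_ones (hx _), sum_boole]

theorem forall_sum_prod_eq_iff_card_subset_ones [DecidableEq ι] [CharZero R]
    (hx : ∀ t j, x t j = 0 ∨ x t j = 1) (hy : ∀ t j, y t j = 0 ∨ y t j = 1) :
    (∀ A : Finset ι, A.Nonempty → ∑ t, ∏ j ∈ A, x t j = ∑ t, ∏ j ∈ A, y t j) ↔
      ∀ A, #{t | A ⊆ ones (x t)} = #{t | A ⊆ ones (y t)} := by
  simp only [sum_prod_eq_card_subset_ones hx, sum_prod_eq_card_subset_ones hy, Nat.cast_inj]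
  refine ⟨fun h A => ?_, fun h A _ => h A⟩
  obtain rfl | hA := A.eq_empty_or_nonempty
  · simp only [empty_subset]
  · exact h A hA

theorem forall_sum_prod_eq_iff_forall_card_eq [CharZero R]
    (hx : ∀ t j, x t j = 0 ∨ x t j = 1) (hy : ∀ t j, y t j = 0 ∨ y t j = 1) :
    (∀ A : Finset ι, A.Nonempty → ∑ t, ∏ j ∈ A, x t j = ∑ t, ∏ j ∈ A, y t j) ↔
      ∀ b : ι → R, (∀ j, b j = 0 ∨ b j = 1) →
        #{t | ∀ j, x t j = b j} = #{t | ∀ j, y t j = b j} := by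
  classical
  exact (forall_sum_prod_eq_iff_card_subset_ones hx hy).trans
    ((forall_card_filter_le_eq_iff _ _).trans (forall_card_ones_eq_iff hx hy))

theorem stmt5_general [CharZero R] {Θ : Type*} {x : Θ → T → ι → R}
    (hx : ∀ τ t j, x τ t j = 0 ∨ x τ t j = 1) :
    (∀ A : Finset ι, A.Nonempty → ∀ τ τ', ∑ t, ∏ j ∈ A, x τ t j = ∑ t, ∏ j ∈ A, x τ' t j) ↔
      ∀ b : ι → R, (∀ j, b j = 0 ∨ b j = 1) →
        ∀ τ τ', #{t | ∀ j, x τ t j = b j} = #{t | ∀ j, x τ' t j = b j} := by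
  have pair (τ τ' : Θ) := forall_sum_prod_eq_iff_forall_card_eq (hx τ) (hx τ')
  exact ⟨fun h b hb τ τ' => (pair τ τ').1 (fun A hA => h A hA τ τ') b hb,
    fun h A hA τ τ' => (pair τ τ').2 (fun b hb => h b hb τ τ') A hA⟩

end Binary

theorem stmt5 (K L : ℕ) (hK : 1 ≤ K) (hL : 1 ≤ L) [NeZero L]
    (s : Fin K → ZMod L → ℕ) (hbin : ∀ i t, s i t = 0 ∨ s i t = 1) :
    IsSI s ↔
      ∀ b : Fin K → ℕ, (∀ i, b i = 0 ∨ b i = 1) →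
        ∀ τ τ' : Fin K → ZMod L, Ncount s b τ = Ncount s b τ' := by
  unfold IsSI Hcorr Ncount
  -- Not `exact`: `Ncount` decides `∀ j : Fin K, _` by `Nat.decidableForallFin`, the general theorem
  -- by `Fintype.decidableForallFintype`.
  convert stmt5_general fun (τ : Fin K → ZMod L) t j => hbin j (t + τ j)
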